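/- Fix integers n ≥ 2 and 1 ≤ d ≤ n, and let G be the band graph on vertices {1,…,n} with bandwidth d, i.e., (i,j) is an edge if and only if i ≠ j and |i−j| ≤ d. Then CE_H(G) = CE_H^ψ(G) = CE_H^φ(G) = min(d, n−2). -/

import Mathlib

open Set Matrix

noncomputable section

/-- Entrywise power function `x ↦ x^α` on nonnegative reals, with the convention `0^α := 0`. -/
def powEnt (α x : ℝ) : ℝ := if x = 0 then 0 else x ^ α

/-- The odd extension `ψ_α(x) = sgn(x)|x|^α` of the power function, with `ψ_α(0) = 0`. -/
def psiF (α x : ℝ) : ℝ := Real.sign x * |x| ^ α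

/-- The even extension `φ_α(x) = |x|^α` of the power function, with `φ_α(0) = 0`. -/
def phiF (α x : ℝ) : ℝ := if x = 0 then 0 else |x| ^ α

/-- `P_G(I)`: positive semidefinite matrices with entries in `I` and zeros outside
the edge pattern of `G`. -/
def PsetG {V : Type*} [Fintype V] (G : SimpleGraph V) (I : Set ℝ) :
    Set (Matrix V V ℝ) :=
  {A | A.PosSemidef ∧ (∀ i j, A i j ∈ I) ∧ ∀ i j, i ≠ j → ¬ G.Adj i j → A i j = 0}

/-- `H_G`: the set of entrywise powers preserving `P_G([0,∞))`. -/
def HsetG {V : Type*} [Fintype V] (G : SimpleGraph V) : Set ℝ :=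
  {α | ∀ A ∈ PsetG G (Ici (0 : ℝ)), A.map (powEnt α) ∈ PsetG G univ}

/-- `H_G^ψ`: the set of powers `α` such that `ψ_α` preserves `P_G(ℝ)`. -/
def HsetPsi {V : Type*} [Fintype V] (G : SimpleGraph V) : Set ℝ :=
  {α | ∀ A ∈ PsetG G univ, A.map (psiF α) ∈ PsetG G univ}

/-- `H_G^φ`: the set of powers `α` such that `φ_α` preserves `P_G(ℝ)`. -/
def HsetPhi {V : Type*} [Fintype V] (G : SimpleGraph V) : Set ℝ :=
  {α | ∀ A ∈ PsetG G univ, A.map (phiF α) ∈ PsetG G univ}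

/-- The set of which the critical exponent is the least element:
all `α` such that every `β ≥ α` lies in `H`. -/
def CEset (H : Set ℝ) : Set ℝ := {α | ∀ β, α ≤ β → β ∈ H}

/-- The positive integers, as a set of reals. -/
def posNats : Set ℝ := {x | ∃ k : ℕ, 0 < k ∧ x = k}

/-- The odd positive integers `−1+2ℕ`, as a set of reals. -/
def oddNats : Set ℝ := {x | ∃ k : ℕ, 0 < k ∧ x = 2 * k - 1}

/-- The even positive integers `2ℕ`, as a set of reals. -/
def evenNats : Set ℝ := {x | ∃ k : ℕ, 0 < k ∧ x = 2 * k}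

/-!
If `f` is a power with exponent at least `1` and `B` is positive semidefinite, then
`f[A + B] - f[A]` is the integral over `t ∈ [0, 1]` of the entrywise product of `B` with
`f'[A + t B]`, so positivity of a power on `k × k` matrices passes to Loewner monotonicity of the
power with exponent one more, and from there to Loewner superadditivity after another
differentiation. Splitting off the rank one matrix of a pivot turns monotonicity back into
positivity on `(k + 1) × (k + 1)` matrices (FitzGerald–Horn), and superadditivity into positivity on
`P_G` when the later neighbours of every vertex form a clique of size at most the exponent. In the
band graph there are at most `d` of them, and the `n - 2` comes from the full cone of `n × n`
matrices.

Conversely, the complete graph on `k + 2` vertices minus an edge sits in the band graph when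
`k ≤ min(d, n - 2)`. Eliminating its two nonadjacent vertices, preservation with exponent `β` says
that `((1 + ε x i x j) ^ β - 1)` dominates `ε ^ β (x i x j) ^ β` on `k × k` matrices. Against a
vector killing the moments `1, …, k - 1` of `x` but not the `β`-th one, the first form is `O(ε ^ k)`
and the second is of order `ε ^ β`, which is impossible for `k - 1 < β < k`.
-/

open scoped Asymptotics SimpleGraph Topology

section PosSemidef

variable {ι : Type*} {A : Matrix ι ι ℝ}

lemma posSemidef_apply_comm (hA : A.PosSemidef) (i j : ι) : A i j = A j i := by
  simpa using hA.isHermitian.apply j i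

lemma posSemidef_sq_apply_le (hA : A.PosSemidef) (i j : ι) : A i j ^ 2 ≤ A i i * A j j := by
  have hdet := (hA.submatrix ![i, j]).det_nonneg
  simp only [det_fin_two, submatrix_apply, cons_val_zero, cons_val_one] at hdet
  rw [posSemidef_apply_comm hA j i] at hdet
  linarith

lemma posSemidef_apply_eq_zero_of_diag (hA : A.PosSemidef) {i : ι} (hi : A i i = 0) (j : ι) :
    A i j = 0 := by
  have hsq := posSemidef_sq_apply_le hA i j
  rw [hi, zero_mul] at hsq
  exact pow_eq_zero_iff two_ne_zero |>.1 (hsq.antisymm (sq_nonneg _))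

lemma posSemidef_iff_sum_nonneg [Fintype ι] : A.PosSemidef ↔
    (∀ i j, A i j = A j i) ∧ ∀ x : ι → ℝ, 0 ≤ ∑ i, ∑ j, x i * x j * A i j := by
  rw [posSemidef_iff_dotProduct_mulVec]
  refine and_congr ⟨fun h i j => by simpa using h.apply j i,
    fun h => IsHermitian.ext fun i j => by simpa using h j i⟩ (forall_congr' fun x => ?_)
  simp only [dotProduct, mulVec, Finset.mul_sum, star_trivial, mul_comm, mul_left_comm]

lemma posSemidef_of_subsingleton [Subsingleton ι] (h : ∀ i, 0 ≤ A i i) : A.PosSemidef := by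
  classical
  convert PosSemidef.diagonal (d := A.diag) h
  ext i j
  simp [Subsingleton.elim j i]

lemma posSemidef_sub_of_hasDerivAt [Finite ι] {F F' : ℝ → Matrix ι ι ℝ}
    (hsymm : ∀ t i j, F t i j = F t j i)
    (hF : ∀ t i j, HasDerivAt (fun t => F t i j) (F' t i j) t)
    (hpos : ∀ t, 0 < t → (F' t).PosSemidef) : (F 1 - F 0).PosSemidef := by
  have := Fintype.ofFinite ι
  refine posSemidef_iff_sum_nonneg.2 ⟨fun i j => by simp [hsymm _ i j], fun x => ?_⟩
  have hder (t : ℝ) : HasDerivAt (fun t => ∑ i, ∑ j, x i * x j * F t i j)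
      (∑ i, ∑ j, x i * x j * F' t i j) t :=
    HasDerivAt.fun_sum fun i _ => HasDerivAt.fun_sum fun j _ => (hF t i j).const_mul _
  have hmono : MonotoneOn (fun t => ∑ i, ∑ j, x i * x j * F t i j) (Ici 0) := by
    refine monotoneOn_of_deriv_nonneg (convex_Ici 0)
      (fun t _ => (hder t).continuousAt.continuousWithinAt)
      (fun t _ => (hder t).differentiableAt.differentiableWithinAt) fun t ht => ?_
    rw [(hder t).deriv]
    exact (posSemidef_iff_sum_nonneg.1 (hpos t (by simpa using ht))).2 x
  simpa [mul_sub] using hmono self_mem_Ici (mem_Ici.2 zero_le_one) zero_le_one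

lemma posSemidef_of_tendsto [Finite ι] {γ : Type*} {l : Filter γ} [l.NeBot]
    {F : γ → Matrix ι ι ℝ} (hF : Filter.Tendsto F l (𝓝 A)) (h : ∀ᶠ c in l, (F c).PosSemidef) :
    A.PosSemidef := by
  have := Fintype.ofFinite ι
  have hentry (i j : ι) : Filter.Tendsto (fun c => F c i j) l (𝓝 (A i j)) :=
    (hF.apply_nhds i).apply_nhds j
  refine posSemidef_iff_sum_nonneg.2 ⟨fun i j => ?_, fun x => ?_⟩
  · refine tendsto_nhds_unique (hentry i j) ((hentry j i).congr' ?_)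
    filter_upwards [h] with c hc using posSemidef_apply_comm hc j i
  · refine ge_of_tendsto (tendsto_finsetSum _ fun i _ => tendsto_finsetSum _ fun j _ =>
      (hentry i j).const_mul (x i * x j)) ?_
    filter_upwards [h] with c hc using (posSemidef_iff_sum_nonneg.1 hc).2 x

end PosSemidef

section Support

variable {ι κ : Type*}

/-- All nonzero entries of `A` lie in the square block `s × s`. -/
def SupportedOn (s : Set ι) (A : Matrix ι ι ℝ) : Prop :=
  ∀ i j, A i j ≠ 0 → i ∈ s ∧ j ∈ s

lemma posSemidef_of_submatrix [Finite ι] [Finite κ] {g : κ → ι} (hg : Function.Injective g)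
    {A : Matrix ι ι ℝ} (hA : SupportedOn (range g) A) (h : (A.submatrix g g).PosSemidef) :
    A.PosSemidef := by
  have := Fintype.ofFinite ι
  have := Fintype.ofFinite κ
  refine posSemidef_iff_sum_nonneg.2 ⟨fun i j => ?_, fun x => ?_⟩
  · by_cases hij : A i j = 0 ∧ A j i = 0
    · rw [hij.1, hij.2]
    have hrange : i ∈ range g ∧ j ∈ range g := by
      by_contra hij'
      exact hij ⟨by_contra fun h => hij' (hA i j h), by_contra fun h => hij' (hA j i h).symm⟩
    obtain ⟨⟨k, rfl⟩, l, rfl⟩ := hrange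
    exact posSemidef_apply_comm h k l
  · convert (posSemidef_iff_sum_nonneg.1 h).2 (x ∘ g) using 1
    refine (Fintype.sum_of_injective g hg _ _ (fun i hi => ?_) fun k =>
      Fintype.sum_of_injective g hg _ (fun j => x (g k) * x j * A (g k) j) (fun j hj => ?_)
        fun l => rfl).symm
    · exact Finset.sum_eq_zero fun j _ =>
        mul_eq_zero_of_right _ (by_contra fun h => hi (hA i j h).1)
    · exact mul_eq_zero_of_right _ (by_contra fun h => hj (hA _ j h).2)

end Support

section SchurComplement

variable {ι : Type*} {A : Matrix ι ι ℝ}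

/-- The rank one matrix with the same `v`-th row and column as the positive semidefinite matrix
`A`. It is zero if `A v v = 0`, thanks to `0⁻¹ = 0`. -/
def pivotPart (A : Matrix ι ι ℝ) (v : ι) : Matrix ι ι ℝ :=
  (A v v)⁻¹ • vecMulVec (A v) (A v)

/-- The Schur complement of the entry `A v v`, with its zero `v`-th row and column kept. -/
def schurCompl (A : Matrix ι ι ℝ) (v : ι) : Matrix ι ι ℝ :=
  A - pivotPart A v

lemma pivotPart_apply_eq_zero {v i j : ι} (h : A v i = 0 ∨ A v j = 0) : pivotPart A v i j = 0 := by
  rcases h with h | h <;> simp [pivotPart, vecMulVec_apply, h]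

lemma ne_zero_of_schurCompl_ne_zero {v i j : ι} (h : schurCompl A v i j ≠ 0) :
    A i j ≠ 0 ∨ A v i ≠ 0 ∧ A v j ≠ 0 := by
  contrapose! h
  have hpivot : pivotPart A v i j = 0 := pivotPart_apply_eq_zero (or_iff_not_imp_left.2 h.2)
  simp [schurCompl, h.1, hpivot]

lemma schurCompl_apply_left (hA : A.PosSemidef) (v j : ι) : schurCompl A v v j = 0 := by
  by_cases hv : A v v = 0
  · simp [schurCompl, pivotPart, hv, posSemidef_apply_eq_zero_of_diag hA hv]
  · simp [schurCompl, pivotPart, vecMulVec_apply, hv]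

lemma schurCompl_apply_right (hA : A.PosSemidef) (v i : ι) : schurCompl A v i v = 0 := by
  have := schurCompl_apply_left hA v i
  simpa [schurCompl, pivotPart, vecMulVec_apply, posSemidef_apply_comm hA v i, mul_comm] using this

lemma supportedOn_schurCompl (hA : A.PosSemidef) (v : ι) : SupportedOn {v}ᶜ (schurCompl A v) := by
  refine fun i j hij => ⟨?_, ?_⟩ <;> rintro rfl
  · exact hij (schurCompl_apply_left hA i j)
  · exact hij (schurCompl_apply_right hA j i)

lemma posSemidef_pivotPart [Finite ι] (hA : A.PosSemidef) (v : ι) : (pivotPart A v).PosSemidef := by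
  simpa [pivotPart] using
    (posSemidef_vecMulVec_self_star (A v)).smul (inv_nonneg.2 (hA.diag_nonneg (i := v)))

lemma posSemidef_schurCompl [Finite ι] (hA : A.PosSemidef) (v : ι) :
    (schurCompl A v).PosSemidef := by
  classical
  have := Fintype.ofFinite ι
  -- Symmetric Gaussian elimination: `L` clears the `v`-th column of `A`.
  let L : Matrix ι ι ℝ := 1 - (A v v)⁻¹ • vecMulVec (A v) (Pi.single v 1)
  have hleft : L * A = schurCompl A v := by
    simp [L, schurCompl, pivotPart, sub_mul, vecMulVec_mul, row_def]
  have hright : schurCompl A v * Lᴴ = schurCompl A v := by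
    have hcol : schurCompl A v *ᵥ Pi.single v 1 = 0 := by
      ext i
      simp [schurCompl_apply_right hA]
    simp [L, mul_sub, mul_vecMulVec, hcol]
  simpa only [hleft, hright] using hA.mul_mul_conjTranspose_same L

lemma supportedOn_schurCompl_of_insert {v : ι} {s : Set ι} (hA : A.PosSemidef)
    (hs : SupportedOn (insert v s) A) : SupportedOn s (schurCompl A v) := by
  intro i j hne
  obtain ⟨hi, hj⟩ := supportedOn_schurCompl hA v i j hne
  have hmem : i ∈ insert v s ∧ j ∈ insert v s := by
    rcases ne_zero_of_schurCompl_ne_zero hne with hAij | ⟨hvi, hvj⟩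
    · exact hs i j hAij
    · exact ⟨(hs v i hvi).2, (hs v j hvj).2⟩
  exact ⟨hmem.1.resolve_left hi, hmem.2.resolve_left hj⟩

end SchurComplement

section Loewner

variable {ι : Type*} {f f' : ℝ → ℝ}

/-- The entrywise map `f[·]` preserves positive semidefiniteness of matrices indexed by `ι`. -/
def PreservesPosSemidef (ι : Type*) (f : ℝ → ℝ) : Prop :=
  ∀ A : Matrix ι ι ℝ, A.PosSemidef → (A.map f).PosSemidef

/-- The entrywise map `f[·]` is monotone on the cone of positive semidefinite matrices indexed
by `ι`, with respect to the Loewner order. -/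
def LoewnerMonotone (ι : Type*) (f : ℝ → ℝ) : Prop :=
  ∀ A B : Matrix ι ι ℝ, A.PosSemidef → B.PosSemidef → ((A + B).map f - A.map f).PosSemidef

/-- The entrywise map `f[·]` is superadditive on the cone of positive semidefinite matrices indexed
by `ι`, with respect to the Loewner order. -/
def LoewnerSuperadditive (ι : Type*) (f : ℝ → ℝ) : Prop :=
  ∀ A B : Matrix ι ι ℝ, A.PosSemidef → B.PosSemidef →
    ((A + B).map f - A.map f - B.map f).PosSemidef

lemma preservesPosSemidef_const_mul {c : ℝ} (hc : 0 ≤ c) (h : PreservesPosSemidef ι f) :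
    PreservesPosSemidef ι fun x => c * f x :=
  fun A hA => (h A hA).smul hc

lemma loewnerMonotone_const_mul {c : ℝ} (hc : 0 ≤ c) (h : LoewnerMonotone ι f) :
    LoewnerMonotone ι fun x => c * f x := by
  intro A B hA hB
  convert (h A B hA hB).smul hc using 1
  ext i j
  simp [mul_sub]

lemma hasDerivAt_comp_add_mul (hf : ∀ x, HasDerivAt f (f' x) x) (a b t : ℝ) :
    HasDerivAt (fun t => f (a + t * b)) (b * f' (a + t * b)) t := by
  have hline : HasDerivAt (fun t : ℝ => a + t * b) b t := by
    simpa using ((hasDerivAt_id t).mul_const b).const_add a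
  simpa only [mul_comm b, Function.comp_def] using (hf (a + t * b)).comp t hline

lemma loewnerMonotone_of_hasDerivAt [Finite ι] (hf : ∀ x, HasDerivAt f (f' x) x)
    (h : PreservesPosSemidef ι f') : LoewnerMonotone ι f := by
  intro A B hA hB
  have hpath (t : ℝ) (i j : ι) : HasDerivAt (fun t : ℝ => (A + t • B).map f i j)
      ((B ⊙ (A + t • B).map f') i j) t := by
    simpa using hasDerivAt_comp_add_mul hf (A i j) (B i j) t
  have hincr := posSemidef_sub_of_hasDerivAt
    (fun t i j => by simp [posSemidef_apply_comm hA i j, posSemidef_apply_comm hB i j]) hpath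
    fun t ht => hB.hadamard (h _ (hA.add (hB.smul ht.le)))
  simpa using hincr

lemma loewnerSuperadditive_of_hasDerivAt [Finite ι] (hf : ∀ x, HasDerivAt f (f' x) x)
    (hf0 : f 0 = 0) (h : LoewnerMonotone ι f') : LoewnerSuperadditive ι f := by
  intro A B hA hB
  have hpath (t : ℝ) (i j : ι) : HasDerivAt (fun t : ℝ => ((A + t • B).map f - (t • B).map f) i j)
      ((B ⊙ ((t • B + A).map f' - (t • B).map f')) i j) t := by
    simpa [mul_sub, add_comm] using (hasDerivAt_comp_add_mul hf (A i j) (B i j) t).fun_sub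
      (hasDerivAt_comp_add_mul hf 0 (B i j) t)
  have hincr := posSemidef_sub_of_hasDerivAt
    (fun t i j => by simp [posSemidef_apply_comm hA i j, posSemidef_apply_comm hB i j]) hpath
    fun t ht => hB.hadamard (h _ _ (hB.smul ht.le) hA)
  convert hincr using 1
  ext i j
  simp [hf0, sub_right_comm]

lemma loewnerMonotone_of_subsingleton [Subsingleton ι] (hf : MonotoneOn f (Ici 0)) :
    LoewnerMonotone ι f := fun A B hA hB => posSemidef_of_subsingleton fun i => by
  have hAi : 0 ≤ A i i := hA.diag_nonneg
  have hBi : 0 ≤ B i i := hB.diag_nonneg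
  simpa using hf hAi (add_nonneg hAi hBi) (le_add_of_nonneg_right hBi)

lemma loewnerSuperadditive_of_subsingleton [Subsingleton ι]
    (hf : ∀ x y, 0 ≤ x → 0 ≤ y → f x + f y ≤ f (x + y)) : LoewnerSuperadditive ι f :=
  fun A B hA hB => posSemidef_of_subsingleton fun i => by
    have := hf (A i i) (B i i) hA.diag_nonneg hB.diag_nonneg
    simp only [Matrix.sub_apply, map_apply, Matrix.add_apply]
    linarith

end Loewner

section Pivot

variable {ι : Type*} [Finite ι] {A : Matrix ι ι ℝ} {v : ι} {f : ℝ →*₀ ℝ}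

lemma monoidWithZeroHom_nonneg (f : ℝ →*₀ ℝ) {x : ℝ} (hx : 0 ≤ x) : 0 ≤ f x := by
  rw [← Real.mul_self_sqrt hx, map_mul]
  exact mul_self_nonneg _

lemma posSemidef_map_pivotPart (f : ℝ →*₀ ℝ) (hA : A.PosSemidef) (v : ι) :
    ((pivotPart A v).map f).PosSemidef := by
  have hscale : 0 ≤ f (A v v)⁻¹ := monoidWithZeroHom_nonneg f (inv_nonneg.2 hA.diag_nonneg)
  convert (posSemidef_vecMulVec_self_star (f ∘ A v)).smul hscale using 1
  ext i j
  simp [pivotPart, vecMulVec_apply]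

lemma posSemidef_map_of_loewnerMonotone (hA : A.PosSemidef)
    (hf : LoewnerMonotone ({v}ᶜ : Set ι) f) : (A.map f).PosSemidef := by
  have hdiff : (A.map f - (pivotPart A v).map f).PosSemidef := by
    refine posSemidef_of_submatrix (g := ((↑) : ({v}ᶜ : Set ι) → ι)) Subtype.val_injective ?_ ?_
    · rw [Subtype.range_coe]
      refine fun i j hij => supportedOn_schurCompl hA v i j fun h => hij ?_
      simp [sub_eq_zero.1 h]
    · convert hf _ _ ((posSemidef_pivotPart hA v).submatrix (↑))
        ((posSemidef_schurCompl hA v).submatrix (↑)) using 1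
      ext i j
      simp [schurCompl]
  simpa using hdiff.add (posSemidef_map_pivotPart f hA v)

lemma posSemidef_map_of_loewnerSuperadditive {T : Set ι} (hA : A.PosSemidef)
    (hT : ∀ i, i ≠ v → A v i ≠ 0 → i ∈ T) (hf : LoewnerSuperadditive T f)
    (hS : ((schurCompl A v).map f).PosSemidef) : (A.map f).PosSemidef := by
  let D := A.map f - (pivotPart A v).map f - (schurCompl A v).map f
  have hD : D.PosSemidef := by
    have hadd (i j : ι) : A i j = pivotPart A v i j + schurCompl A v i j := by simp [schurCompl]
    refine posSemidef_of_submatrix (g := ((↑) : T → ι)) Subtype.val_injective ?_ ?_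
    · have hsplit {i j : ι} (h : pivotPart A v i j = 0 ∨ schurCompl A v i j = 0) : D i j = 0 := by
        rcases h with h | h <;> simp [D, hadd i j, h]
      rw [Subtype.range_coe]
      refine fun i j hij => ⟨hT i ?_ ?_, hT j ?_ ?_⟩
      · exact fun h => hij (hsplit (.inr (h ▸ schurCompl_apply_left hA v j)))
      · exact fun h => hij (hsplit (.inl (pivotPart_apply_eq_zero (.inl h))))
      · exact fun h => hij (hsplit (.inr (h ▸ schurCompl_apply_right hA v i)))
      · exact fun h => hij (hsplit (.inl (pivotPart_apply_eq_zero (.inr h))))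
    · convert hf _ _ ((posSemidef_pivotPart hA v).submatrix (↑))
        ((posSemidef_schurCompl hA v).submatrix (↑)) using 1
      ext i j
      simp [D, schurCompl]
  simpa [D] using (hD.add hS).add (posSemidef_map_pivotPart f hA v)

end Pivot

section SignedPow

lemma real_sign_mul (x y : ℝ) : Real.sign (x * y) = Real.sign x * Real.sign y := by
  have hpos {x : ℝ} (hx : 0 < x) : Real.sign (x * y) = Real.sign x * Real.sign y := by
    simp [Real.sign, hx, hx.not_gt, mul_neg_iff]
  rcases lt_trichotomy x 0 with hx | rfl | hx
  · simpa [Real.sign_neg] using hpos (neg_pos.2 hx)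
  · simp
  · exact hpos hx

/-- The even extension `φ_α` (`even = true`) and the odd extension `ψ_α` (`even = false`) of the
power function, as multiplicative maps. Differentiation exchanges the two families. -/
def signedPow (even : Bool) (α : ℝ) : ℝ →*₀ ℝ where
  toFun := if even then phiF α else psiF α
  map_zero' := by cases even <;> simp [phiF, psiF]
  map_one' := by cases even <;> simp [phiF, psiF]
  map_mul' x y := by
    rcases eq_or_ne x 0 with rfl | hx
    · cases even <;> simp [phiF, psiF]
    rcases eq_or_ne y 0 with rfl | hy
    · cases even <;> simp [phiF, psiF]
    cases even
    · simp [psiF, real_sign_mul, abs_mul, Real.mul_rpow, mul_mul_mul_comm]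
    · simp [phiF, hx, hy, abs_mul, Real.mul_rpow]

variable {α : ℝ}

lemma signedPow_of_pos (e : Bool) (α : ℝ) {x : ℝ} (hx : 0 < x) : signedPow e α x = x ^ α := by
  cases e <;> simp [signedPow, phiF, psiF, hx.ne', Real.sign_of_pos hx, abs_of_pos hx]

lemma signedPow_neg (e : Bool) (α x : ℝ) :
    signedPow e α (-x) = (if e then 1 else -1) * signedPow e α x := by
  cases e <;> simp [signedPow, phiF, psiF, Real.sign_neg]

lemma signedPow_of_nonneg (e : Bool) (hα : 0 < α) {x : ℝ} (hx : 0 ≤ x) :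
    signedPow e α x = x ^ α := by
  rcases hx.eq_or_lt with rfl | hx
  · rw [map_zero, Real.zero_rpow hα.ne']
  · exact signedPow_of_pos e α hx

lemma powEnt_eq_signedPow (e : Bool) (α : ℝ) {x : ℝ} (hx : 0 ≤ x) :
    powEnt α x = signedPow e α x := by
  rcases hx.eq_or_lt with rfl | hx
  · simp [powEnt]
  · rw [signedPow_of_pos e α hx, powEnt, if_neg hx.ne']

lemma abs_signedPow (e : Bool) (hα : 0 < α) (x : ℝ) : |signedPow e α x| = |x| ^ α := by
  rw [← signedPow_of_nonneg e hα (abs_nonneg x)]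
  rcases abs_choice x with hx | hx
  · rw [hx, abs_of_nonneg (monoidWithZeroHom_nonneg _ (hx ▸ abs_nonneg x))]
  · rw [← abs_of_nonneg (monoidWithZeroHom_nonneg (signedPow e α) (abs_nonneg x)), hx,
      signedPow_neg, abs_mul]
    cases e <;> simp

lemma continuous_signedPow (e : Bool) (x : ℝ) : Continuous fun α => signedPow e α x := by
  have hpos {x : ℝ} (hx : 0 < x) : Continuous fun α => signedPow e α x := by
    simp only [signedPow_of_pos e _ hx]
    exact Real.continuous_const_rpow hx.ne'
  rcases lt_trichotomy x 0 with hx | rfl | hx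
  · rw [← neg_neg x]
    simp only [signedPow_neg e _ (-x)]
    exact continuous_const.mul (hpos (neg_pos.2 hx))
  · simpa only [map_zero] using continuous_const
  · exact hpos hx

lemma hasDerivAt_signedPow (e : Bool) (hα : 1 < α) (x : ℝ) :
    HasDerivAt (signedPow e α) (α * signedPow (!e) (α - 1) x) x := by
  have hpos {x : ℝ} (hx : 0 < x) :
      HasDerivAt (signedPow e α) (α * signedPow (!e) (α - 1) x) x := by
    rw [signedPow_of_pos _ _ hx]
    refine (Real.hasDerivAt_rpow_const (.inl hx.ne')).congr_of_eventuallyEq ?_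
    filter_upwards [Ioi_mem_nhds hx] with y hy using signedPow_of_pos e α hy
  rcases lt_trichotomy x 0 with hx | rfl | hx
  · have hneg := ((hpos (neg_pos.2 hx)).comp x (hasDerivAt_neg x)).const_mul
      (if e then 1 else -1 : ℝ)
    have hodd : (fun y => (if e then 1 else -1 : ℝ) * signedPow e α (-y)) = signedPow e α := by
      ext y
      rw [← signedPow_neg, neg_neg]
    rw [← hodd]
    refine hneg.congr_deriv ?_
    rw [signedPow_neg]
    cases e <;> simp
  · have hα0 : 0 < α := by linarith
    have habs : HasDerivAt (fun x : ℝ => |x| ^ α) 0 0 := by simpa using hasDerivAt_abs_rpow 0 hα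
    rw [map_zero, mul_zero]
    rw [hasDerivAt_iff_isLittleO_nhds_zero] at habs ⊢
    refine Asymptotics.isLittleO_norm_left.1 ?_
    simpa [abs_signedPow e hα0, Real.zero_rpow hα0.ne'] using habs
  · exact hpos hx

lemma monotoneOn_signedPow (e : Bool) (hα : 0 ≤ α) : MonotoneOn (signedPow e α) (Ici 0) := by
  intro x hx y hy hxy
  rcases (mem_Ici.1 hx).eq_or_lt with rfl | hx
  · simpa using monoidWithZeroHom_nonneg (signedPow e α) hy
  · rw [signedPow_of_pos e α hx, signedPow_of_pos e α (hx.trans_le hxy)]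
    exact Real.rpow_le_rpow hx.le hxy hα

lemma signedPow_add_le (e : Bool) (hα : 1 ≤ α) {x y : ℝ} (hx : 0 ≤ x) (hy : 0 ≤ y) :
    signedPow e α x + signedPow e α y ≤ signedPow e α (x + y) := by
  have hα0 : 0 < α := by linarith
  simpa only [signedPow_of_nonneg e hα0, hx, hy, add_nonneg] using
    Real.add_rpow_le_rpow_add hx hy hα

end SignedPow

section FitzGeraldHorn

variable {ι : Type*} [Finite ι] {α : ℝ}

lemma loewnerMonotone_signedPow_of_forall_gt (e : Bool) (hα : 1 ≤ α)
    (h : ∀ e β, α - 1 < β → PreservesPosSemidef ι (signedPow e β)) :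
    LoewnerMonotone ι (signedPow e α) := by
  intro A B hA hB
  have hgt (β : ℝ) (hβ : α < β) : LoewnerMonotone ι (signedPow e β) :=
    loewnerMonotone_of_hasDerivAt (hasDerivAt_signedPow e (hα.trans_lt hβ))
      (preservesPosSemidef_const_mul (by linarith) (h _ _ (by linarith)))
  have hlim : Filter.Tendsto (fun β => (A + B).map (signedPow e β) - A.map (signedPow e β))
      (𝓝[>] α) (𝓝 ((A + B).map (signedPow e α) - A.map (signedPow e α))) := by
    have hcont : Continuous fun β => (A + B).map (signedPow e β) - A.map (signedPow e β) :=
      continuous_matrix fun i j => (continuous_signedPow e _).sub (continuous_signedPow e _)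
    exact hcont.continuousAt.tendsto.mono_left nhdsWithin_le_nhds
  refine posSemidef_of_tendsto hlim ?_
  filter_upwards [self_mem_nhdsWithin] with β hβ using hgt β hβ A B hA hB

lemma loewnerMonotone_signedPow_of_preserves (e : Bool) (hα : 0 ≤ α) (hcard : Nat.card ι ≤ α + 1)
    (h : ∀ (e : Bool) (β : ℝ), 0 ≤ β → Nat.card ι ≤ β + 2 →
      PreservesPosSemidef ι (signedPow e β)) :
    LoewnerMonotone ι (signedPow e α) := by
  rcases le_or_gt 1 α with hα1 | hα1
  · exact loewnerMonotone_signedPow_of_forall_gt e hα1 fun e β hβ =>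
      h e β (by linarith) (by linarith)
  · have hcard1 : Nat.card ι < 2 := by exact_mod_cast (by linarith : (Nat.card ι : ℝ) < 2)
    have : Subsingleton ι := Finite.card_le_one_iff_subsingleton.1 (by omega)
    exact loewnerMonotone_of_subsingleton (monotoneOn_signedPow e hα)

theorem preservesPosSemidef_signedPow (e : Bool) (hα : 0 ≤ α) (hcard : Nat.card ι ≤ α + 2) :
    PreservesPosSemidef ι (signedPow e α) := by
  induction hn : Nat.card ι generalizing ι e α with
  | zero =>
    have : IsEmpty ι := (Finite.card_eq_zero_iff).1 hn
    exact fun A _ => posSemidef_of_subsingleton isEmptyElim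
  | succ n ih =>
    have : Nonempty ι := (Finite.card_pos_iff).1 (by omega)
    obtain ⟨v⟩ := this
    have hcompl : Nat.card ({v}ᶜ : Set ι) = n := by
      rw [Nat.card_coe_set_eq, ncard_compl, ncard_singleton, hn, Nat.add_sub_cancel]
    refine fun A hA => posSemidef_map_of_loewnerMonotone (v := v) hA ?_
    refine loewnerMonotone_signedPow_of_preserves e hα ?_ fun e β hβ hcardβ => ih e hβ hcardβ hcompl
    rw [hn] at hcard
    push_cast [hcompl] at hcard ⊢
    linarith

lemma loewnerMonotone_signedPow (e : Bool) (hα : 0 ≤ α) (hcard : Nat.card ι ≤ α + 1) :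
    LoewnerMonotone ι (signedPow e α) :=
  loewnerMonotone_signedPow_of_preserves e hα hcard fun e _ => preservesPosSemidef_signedPow e

theorem loewnerSuperadditive_signedPow (e : Bool) (hα : 1 ≤ α) (hcard : Nat.card ι ≤ α) :
    LoewnerSuperadditive ι (signedPow e α) := by
  rcases le_or_gt (Nat.card ι) 1 with hι | hι
  · have : Subsingleton ι := Finite.card_le_one_iff_subsingleton.1 hι
    exact loewnerSuperadditive_of_subsingleton fun x y => signedPow_add_le e hα
  · have hα2 : (2 : ℝ) ≤ α := le_trans (by exact_mod_cast hι) hcard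
    exact loewnerSuperadditive_of_hasDerivAt (hasDerivAt_signedPow e (by linarith)) (map_zero _)
      (loewnerMonotone_const_mul (by linarith)
        (loewnerMonotone_signedPow _ (by linarith) (by linarith)))

end FitzGeraldHorn

section Pattern

variable {V : Type*} [Fintype V] {G : SimpleGraph V} {I : Set ℝ} {A : Matrix V V ℝ}

lemma adj_of_mem_PsetG (hA : A ∈ PsetG G I) {i j : V} (hij : i ≠ j) (hAij : A i j ≠ 0) :
    G.Adj i j :=
  by_contra fun hadj => hAij (hA.2.2 i j hij hadj)

end Pattern

section Elimination

variable {V : Type*} [LinearOrder V] {G : SimpleGraph V}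

/-- The neighbours of `v` that come after `v`. The order is a perfect elimination order of `G` when
all these sets are cliques. -/
def laterNeighborSet (G : SimpleGraph V) (v : V) : Set V :=
  {w | v < w ∧ G.Adj v w}

variable [Fintype V] {A : Matrix V V ℝ}

lemma mem_laterNeighborSet_of_supportedOn {v : V} {s : Finset V} (hv : ∀ w ∈ s, v < w)
    (hA : A ∈ PsetG G univ) (hs : SupportedOn (insert v ↑s) A) {i : V} (hi : i ≠ v)
    (hvi : A v i ≠ 0) : i ∈ laterNeighborSet G v :=
  ⟨hv i ((hs v i hvi).2.resolve_left hi), adj_of_mem_PsetG hA hi.symm hvi⟩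

lemma schurCompl_mem_PsetG {v : V} {s : Finset V} (hv : ∀ w ∈ s, v < w)
    (hclique : G.IsClique (laterNeighborSet G v)) (hA : A ∈ PsetG G univ)
    (hs : SupportedOn (insert v ↑s) A) :
    schurCompl A v ∈ PsetG G univ := by
  refine ⟨posSemidef_schurCompl hA.1 v, fun _ _ => mem_univ _, fun i j hij hadj => ?_⟩
  by_contra hne
  obtain ⟨hi, hj⟩ := supportedOn_schurCompl hA.1 v i j hne
  rcases ne_zero_of_schurCompl_ne_zero hne with hAij | ⟨hvi, hvj⟩
  · exact hadj (adj_of_mem_PsetG hA hij hAij)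
  · exact hadj (hclique (mem_laterNeighborSet_of_supportedOn hv hA hs hi hvi)
      (mem_laterNeighborSet_of_supportedOn hv hA hs hj hvj) hij)

theorem posSemidef_map_of_isClique_laterNeighborSet {f : ℝ →*₀ ℝ}
    (hclique : ∀ v, G.IsClique (laterNeighborSet G v))
    (hf : ∀ v, LoewnerSuperadditive (laterNeighborSet G v) f) (hA : A ∈ PsetG G univ) :
    (A.map f).PosSemidef := by
  suffices h : ∀ s : Finset V, ∀ A ∈ PsetG G univ, SupportedOn ↑s A → (A.map f).PosSemidef from
    h Finset.univ A hA fun i j _ => by simp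
  intro s
  induction s using Finset.induction_on_min with
  | empty =>
    intro A _ hs
    have hA0 : A.map f = 0 := by
      ext i j
      have hij : A i j = 0 := by_contra fun h => by simpa using hs i j h
      simp [hij]
    exact hA0 ▸ PosSemidef.zero
  | insert v s hv ih =>
    intro A hA hs
    rw [Finset.coe_insert] at hs
    exact posSemidef_map_of_loewnerSuperadditive hA.1
      (fun i => mem_laterNeighborSet_of_supportedOn hv hA hs) (hf v)
      (ih _ (schurCompl_mem_PsetG hv (hclique v) hA hs) (supportedOn_schurCompl_of_insert hA.1 hs))

end Elimination

section BandGraph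

variable {n d : ℕ}

/-- The band graph on `Fin n` with bandwidth `d`, whose edges join the distinct vertices at
distance at most `d`. -/
def bandGraph (n d : ℕ) : SimpleGraph (Fin n) where
  Adj i j := i ≠ j ∧ ((i : ℤ) - (j : ℤ)).natAbs ≤ d
  symm := ⟨fun i j h => ⟨h.1.symm, by omega⟩⟩

lemma bandGraph_adj {i j : Fin n} :
    (bandGraph n d).Adj i j ↔ i ≠ j ∧ ((i : ℤ) - (j : ℤ)).natAbs ≤ d :=
  .rfl

lemma isClique_laterNeighborSet_bandGraph (v : Fin n) :
    (bandGraph n d).IsClique (laterNeighborSet (bandGraph n d) v) := by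
  rintro i ⟨hvi, hi⟩ j ⟨hvj, hj⟩ hij
  rw [bandGraph_adj] at hi hj ⊢
  rw [Fin.lt_def] at hvi hvj
  exact ⟨hij, by omega⟩

lemma card_laterNeighborSet_bandGraph_le (v : Fin n) :
    Nat.card (laterNeighborSet (bandGraph n d) v) ≤ d := by
  have hmaps : MapsTo Fin.val (laterNeighborSet (bandGraph n d) v)
      (Finset.Ioc (v : ℕ) (v + d)) := by
    rintro i ⟨hvi, hi⟩
    rw [bandGraph_adj] at hi
    rw [Fin.lt_def] at hvi
    simp only [Finset.coe_Ioc, mem_Ioc]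
    omega
  simpa [Nat.card_coe_set_eq, ncard_coe_finset] using
    ncard_le_ncard_of_injOn _ hmaps Fin.val_injective.injOn

lemma map_signedPow_mem_PsetG_bandGraph (hn : 2 ≤ n) (hd : 1 ≤ d) (e : Bool) {β : ℝ}
    (hβ : min (d : ℝ) ((n : ℝ) - 2) ≤ β) {A : Matrix (Fin n) (Fin n) ℝ}
    (hA : A ∈ PsetG (bandGraph n d) univ) :
    A.map (signedPow e β) ∈ PsetG (bandGraph n d) univ := by
  refine ⟨?_, fun _ _ => mem_univ _, fun i j hij hadj => by simp [hA.2.2 i j hij hadj]⟩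
  rcases min_le_iff.1 hβ with hdβ | hnβ
  · have hβ1 : 1 ≤ β := le_trans (by exact_mod_cast hd) hdβ
    exact posSemidef_map_of_isClique_laterNeighborSet isClique_laterNeighborSet_bandGraph
      (fun v => loewnerSuperadditive_signedPow e hβ1
        (le_trans (by exact_mod_cast card_laterNeighborSet_bandGraph_le v) hdβ)) hA
  · have hn' : (2 : ℝ) ≤ n := by exact_mod_cast hn
    exact preservesPosSemidef_signedPow e (by linarith) (by simpa using sub_le_iff_le_add.1 hnβ)
      A hA.1

end BandGraph

section Subgraph

variable {V W : Type*} {M : Matrix W W ℝ}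

/-- The matrix obtained from `M` by relabelling its indices along the injective map `g` and filling
up with zeros. -/
def zeroExtension (g : W → V) (M : Matrix W W ℝ) : Matrix V V ℝ :=
  of (Function.extend g (fun k => Function.extend g (M k) 0) 0)

lemma zeroExtension_apply {g : W → V} (hg : Function.Injective g) (k l : W) :
    zeroExtension g M (g k) (g l) = M k l := by
  simp [zeroExtension, hg.extend_apply]

lemma supportedOn_zeroExtension {g : W → V} (hg : Function.Injective g) :
    SupportedOn (range g) (zeroExtension g M) := by
  intro i j hne
  have hi : i ∈ range g := by
    by_contra hi
    exact hne (by simp [zeroExtension, Function.extend_apply' _ _ _ hi])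
  refine ⟨hi, by_contra fun hj => hne ?_⟩
  obtain ⟨k, rfl⟩ := hi
  simp [zeroExtension, hg.extend_apply, Function.extend_apply' _ _ _ hj]

variable [Fintype V] [Fintype W] {H : SimpleGraph W} {G : SimpleGraph V} {I : Set ℝ}

lemma zeroExtension_mem_PsetG (φ : H.Copy G) (hI : 0 ∈ I) (hM : M ∈ PsetG H I) :
    zeroExtension φ M ∈ PsetG G I := by
  have hφ : Function.Injective φ := φ.injective
  have hsupp := supportedOn_zeroExtension (M := M) hφ
  refine ⟨posSemidef_of_submatrix hφ hsupp ?_, fun i j => ?_, fun i j hij hadj => ?_⟩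
  · convert hM.1 using 1
    ext k l
    exact zeroExtension_apply hφ k l
  · by_cases hne : zeroExtension φ M i j = 0
    · rwa [hne]
    · obtain ⟨⟨k, rfl⟩, l, rfl⟩ := hsupp i j hne
      simpa only [zeroExtension_apply hφ] using hM.2.1 k l
  · by_contra hne
    obtain ⟨⟨k, rfl⟩, l, rfl⟩ := hsupp i j hne
    rw [zeroExtension_apply hφ] at hne
    exact hadj (φ.toHom.map_adj (adj_of_mem_PsetG hM (fun h => hij (h ▸ rfl)) hne))

theorem HsetG_subset_of_isContained (h : H ⊑ G) : HsetG G ⊆ HsetG H := by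
  obtain ⟨φ⟩ := h
  have hφ : Function.Injective φ := φ.injective
  refine fun β hβ M hM => ⟨?_, fun _ _ => mem_univ _, fun i j hij hadj => ?_⟩
  · convert (hβ _ (zeroExtension_mem_PsetG φ self_mem_Ici hM)).1.submatrix φ using 1
    ext k l
    simp [zeroExtension_apply hφ]
  · simp [hM.2.2 i j hij hadj, powEnt]

end Subgraph

section CompleteSplitGraph

variable {κ μ : Type*}

/-- The complete split graph on `κ ⊕ μ`, in which two distinct vertices are adjacent unless both of
them lie in `μ`. For `μ = Fin 2` it is a complete graph minus one edge. -/
def completeSplitGraph (κ μ : Type*) : SimpleGraph (κ ⊕ μ) where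
  Adj x y := x ≠ y ∧ (x.isLeft ∨ y.isLeft)
  symm := ⟨fun _ _ h => ⟨h.1.symm, h.2.symm⟩⟩

lemma posSemidef_fromBlocks_one_iff [Finite κ] [Fintype μ] [DecidableEq μ] (A : Matrix κ κ ℝ)
    (N : Matrix κ μ ℝ) : (fromBlocks A N Nᴴ 1).PosSemidef ↔ (A - N * Nᴴ).PosSemidef := by
  let : Invertible (1 : Matrix μ μ ℝ) := invertibleOne
  simpa using PosDef.fromBlocks₂₂ A N PosDef.one

variable [Fintype κ] [Fintype μ] {β : ℝ}

lemma fromBlocks_mem_PsetG_completeSplitGraph [DecidableEq μ] {N : Matrix κ μ ℝ}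
    (hN : ∀ i j, 0 ≤ N i j) :
    fromBlocks (N * Nᴴ) N Nᴴ 1 ∈ PsetG (completeSplitGraph κ μ) (Ici 0) := by
  refine ⟨?_, ?_, ?_⟩
  · exact (posSemidef_fromBlocks_one_iff _ N).2 (sub_self (N * Nᴴ) ▸ PosSemidef.zero)
  · rintro (i | i) (j | j)
    · exact Finset.sum_nonneg fun l _ => mul_nonneg (hN i l) (by simpa using hN j l)
    · exact hN i j
    · simpa using hN j i
    · by_cases hij : i = j <;> simp [hij]
  · rintro (i | i) (j | j) hij hadj
    · exact absurd ⟨hij, .inl rfl⟩ hadj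
    · exact absurd ⟨hij, .inl rfl⟩ hadj
    · exact absurd ⟨hij, .inr rfl⟩ hadj
    · exact one_apply_ne fun h => hij (h ▸ rfl)

lemma posSemidef_sub_of_mem_HsetG_completeSplitGraph (hβ : β ∈ HsetG (completeSplitGraph κ μ))
    {N : Matrix κ μ ℝ} (hN : ∀ i j, 0 ≤ N i j) :
    ((N * Nᴴ).map (powEnt β) - N.map (powEnt β) * (N.map (powEnt β))ᴴ).PosSemidef := by
  classical
  have h := (hβ _ (fromBlocks_mem_PsetG_completeSplitGraph hN)).1
  have hone : (1 : Matrix μ μ ℝ).map (powEnt β) = 1 :=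
    Matrix.map_one _ (by simp [powEnt]) (by simp [powEnt])
  have htranspose : Nᴴ.map (powEnt β) = (N.map (powEnt β))ᴴ := rfl
  rw [fromBlocks_map, hone, htranspose] at h
  exact (posSemidef_fromBlocks_one_iff _ _).1 h

lemma sq_sum_mul_rpow_le_of_mem_HsetG (hβ : β ∈ HsetG (completeSplitGraph κ (Fin 2)))
    (v : κ → ℝ) {y : κ → ℝ} (hy : ∀ i, 0 < y i) :
    (∑ i, v i * y i ^ β) ^ 2 ≤ ∑ i, ∑ j, v i * v j * ((1 + y i * y j) ^ β - 1) := by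
  have h := (posSemidef_iff_sum_nonneg.1 (posSemidef_sub_of_mem_HsetG_completeSplitGraph hβ
    (N := of fun i => ![1, y i]) fun i j => by fin_cases j <;> simp [(hy i).le])).2 v
  have hpos (i j : κ) : 0 < 1 + y i * y j := by have := hy i; have := hy j; positivity
  rw [sq, Finset.sum_mul_sum, ← sub_nonneg]
  simp only [← Finset.sum_sub_distrib]
  convert h using 5 with i _ j _
  simp [mul_apply, powEnt, (hy _).ne', (hpos _ _).ne']
  ring

end CompleteSplitGraph

section Moments

lemma exists_sum_mul_rpow_eq {k : ℕ} {a : Fin k → ℝ} (ha : Function.Injective a) (b : Fin k → ℝ) :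
    ∃ v : Fin k → ℝ, ∀ j, ∑ i, v i * ((2 : ℝ) ^ (i : ℕ)) ^ a j = b j := by
  let M := vandermonde fun j => (2 : ℝ) ^ a j
  have hM : IsUnit M.det := by
    rw [isUnit_iff_ne_zero, det_vandermonde_ne_zero_iff]
    exact fun i j hij => ha ((Real.rpow_right_inj two_pos (by norm_num)).1 hij)
  refine ⟨M⁻¹ *ᵥ b, fun j => ?_⟩
  calc ∑ i, (M⁻¹ *ᵥ b) i * ((2 : ℝ) ^ (i : ℕ)) ^ a j = (M *ᵥ (M⁻¹ *ᵥ b)) j :=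
        Finset.sum_congr rfl fun i _ => by
          simp only [M, vandermonde_apply, Real.rpow_pow_comm two_pos.le, mul_comm]
    _ = b j := by rw [mulVec_mulVec, mul_nonsing_inv _ hM, one_mulVec]

lemma exists_moment_weights {l : ℕ} {β : ℝ} (hβ : (l : ℝ) < β) :
    ∃ v : Fin (l + 1) → ℝ, (∀ m < l, ∑ i, v i * ((2 : ℝ) ^ (i : ℕ)) ^ (m + 1) = 0) ∧
      ∑ i, v i * ((2 : ℝ) ^ (i : ℕ)) ^ β = 1 := by
  have ha : Function.Injective (Fin.cons β fun j : Fin l => (j : ℝ) + 1 : Fin (l + 1) → ℝ) := by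
    refine Fin.cons_injective_iff.2 ⟨?_, fun i j hij => Fin.ext (by simpa using hij)⟩
    rintro ⟨j, hj⟩
    have hjl : (j : ℝ) + 1 ≤ l := by exact_mod_cast j.2
    linarith
  obtain ⟨v, hv⟩ := exists_sum_mul_rpow_eq ha (Fin.cons 1 0)
  refine ⟨v, fun m hm => ?_, hv 0⟩
  have h := hv (Fin.succ ⟨m, hm⟩)
  simp only [Fin.cons_succ, Pi.zero_apply] at h
  exact_mod_cast h

lemma sum_sum_mul_pow_eq_zero_of_moments {κ : Type*} [Fintype κ] {l : ℕ} {v x : κ → ℝ}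
    (hv : ∀ m < l, ∑ i, v i * x i ^ (m + 1) = 0) (c : ℕ → ℝ) (ε : ℝ) :
    ∑ i, ∑ j, v i * v j * ∑ m ∈ Finset.range l, (ε * (x i * x j)) ^ (m + 1) * c m = 0 := by
  have hterm (i j : κ) : v i * v j * ∑ m ∈ Finset.range l, (ε * (x i * x j)) ^ (m + 1) * c m =
      ∑ m ∈ Finset.range l,
        ε ^ (m + 1) * c m * ((v i * x i ^ (m + 1)) * (v j * x j ^ (m + 1))) := by
    rw [Finset.mul_sum]
    refine Finset.sum_congr rfl fun m _ => ?_
    rw [mul_pow, mul_pow]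
    ring
  simp only [hterm]
  rw [Finset.sum_congr rfl fun i _ => Finset.sum_comm, Finset.sum_comm]
  refine Finset.sum_eq_zero fun m hm => ?_
  simp [← Finset.mul_sum, hv m (Finset.mem_range.1 hm)]

lemma isBigO_sum_sum_mul_of_moments {κ : Type*} [Fintype κ] {l : ℕ} {f : ℝ → ℝ}
    (hf : AnalyticAt ℝ f 0) (hf0 : f 0 = 0) {v x : κ → ℝ}
    (hv : ∀ m < l, ∑ i, v i * x i ^ (m + 1) = 0) :
    (fun ε => ∑ i, ∑ j, v i * v j * f (ε * (x i * x j))) =O[𝓝 0] fun ε => ε ^ (l + 1) := by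
  obtain ⟨p, hp⟩ := hf
  have hp0 : p.coeff 0 = 0 := (hp.coeff_zero _).trans hf0
  have hTaylor (c : ℝ) : (fun ε => f (ε * c) -
      ∑ m ∈ Finset.range l, (ε * c) ^ (m + 1) * p.coeff (m + 1)) =O[𝓝 0] fun ε => ε ^ (l + 1) := by
    have hlim : Filter.Tendsto (fun ε : ℝ => ε * c) (𝓝 0) (𝓝 0) := by
      simpa using (continuous_mul_const c).tendsto 0
    have hrem := (hp.isBigO_sub_partialSum_pow (l + 1)).comp_tendsto hlim
    refine .trans (.congr_left hrem fun ε => ?_)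
      (.of_bound (|c| ^ (l + 1)) (.of_forall fun ε => ?_))
    · simp [FormalMultilinearSeries.partialSum, Finset.sum_range_succ' _ l, hp0]
    · simp [mul_pow, mul_comm]
  have hsum := Asymptotics.IsBigO.fun_sum (s := Finset.univ) fun i _ =>
    Asymptotics.IsBigO.fun_sum (s := Finset.univ) fun j _ =>
      (hTaylor (x i * x j)).const_mul_left (v i * v j)
  refine hsum.congr_left fun ε => ?_
  simp only [mul_sub, Finset.sum_sub_distrib, sub_eq_self]
  exact sum_sum_mul_pow_eq_zero_of_moments hv _ ε

end Moments

section PowerDefect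

lemma isLittleO_pow_rpow {k : ℕ} {β : ℝ} (hβ : β < k) :
    (fun ε : ℝ => ε ^ k) =o[𝓝[>] 0] fun ε => ε ^ β := by
  have hlim : Filter.Tendsto (fun ε : ℝ => ε ^ (k - β)) (𝓝[>] 0) (𝓝 0) := by
    have hcont : ContinuousAt (fun ε : ℝ => ε ^ (k - β)) 0 :=
      Real.continuousAt_rpow_const _ _ (.inr (sub_nonneg.2 hβ.le))
    simpa [Real.zero_rpow (sub_pos.2 hβ).ne'] using hcont.tendsto.mono_left nhdsWithin_le_nhds
  refine Asymptotics.isLittleO_of_tendsto' ?_ (hlim.congr' ?_)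
  · filter_upwards [self_mem_nhdsWithin] with ε hε h
    exact absurd h (Real.rpow_pos_of_pos hε β).ne'
  · filter_upwards [self_mem_nhdsWithin] with ε hε
    rw [Real.rpow_sub hε, Real.rpow_natCast]

lemma rpow_le_sum_of_mem_HsetG {κ : Type*} [Fintype κ] {β ε : ℝ}
    (hβ : β ∈ HsetG (completeSplitGraph κ (Fin 2))) {v x : κ → ℝ} (hx : ∀ i, 0 < x i)
    (hv : ∑ i, v i * x i ^ β = 1) (hε : 0 < ε) :
    ε ^ β ≤ ∑ i, ∑ j, v i * v j * ((1 + ε * (x i * x j)) ^ β - 1) := by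
  have hterm (i : κ) : v i * (√ε * x i) ^ β = √ε ^ β * (v i * x i ^ β) := by
    rw [Real.mul_rpow (by positivity) (hx i).le]
    ring
  have hmul (i j : κ) : √ε * x i * (√ε * x j) = ε * (x i * x j) := by
    rw [mul_mul_mul_comm, Real.mul_self_sqrt hε.le]
  have h := sq_sum_mul_rpow_le_of_mem_HsetG hβ v (y := fun i => √ε * x i)
    fun i => mul_pos (Real.sqrt_pos.2 hε) (hx i)
  simp only [hterm, hmul, ← Finset.mul_sum, hv, mul_one] at h
  rwa [Real.rpow_pow_comm (by positivity), Real.sq_sqrt hε.le] at h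

theorem not_mem_HsetG_completeSplitGraph {l : ℕ} {β : ℝ} (hlβ : l < β) (hβl : β < l + 1) :
    β ∉ HsetG (completeSplitGraph (Fin (l + 1)) (Fin 2)) := by
  intro hβ
  obtain ⟨v, hmoment, hβmoment⟩ := exists_moment_weights hlβ
  let D : ℝ → ℝ := fun ε => ∑ i, ∑ j, v i * v j * ((1 + ε * (2 ^ (i : ℕ) * 2 ^ (j : ℕ))) ^ β - 1)
  have hupper : D =O[𝓝 0] fun ε => ε ^ (l + 1) :=
    isBigO_sum_sum_mul_of_moments (f := fun y => (1 + y) ^ β - 1)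
      (Real.one_add_rpow_hasFPowerSeriesAt_zero.analyticAt.sub analyticAt_const) (by simp) hmoment
  have hO : (fun ε : ℝ => ε ^ β) =O[𝓝[>] 0] D := by
    refine .of_bound 1 ?_
    filter_upwards [self_mem_nhdsWithin] with ε hε
    rw [one_mul, Real.norm_of_nonneg (Real.rpow_pos_of_pos hε β).le]
    exact (rpow_le_sum_of_mem_HsetG hβ (fun _ => by positivity) hβmoment hε).trans (le_abs_self _)
  have hne : ∃ᶠ ε : ℝ in 𝓝[>] 0, ε ^ β ≠ 0 := by
    refine Filter.Eventually.frequently ?_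
    filter_upwards [self_mem_nhdsWithin] with ε hε using (Real.rpow_pos_of_pos hε β).ne'
  refine Asymptotics.isLittleO_irrefl hne ?_
  exact hO.trans_isLittleO
    ((hupper.mono nhdsWithin_le_nhds).trans_isLittleO (isLittleO_pow_rpow (by exact_mod_cast hβl)))

end PowerDefect

section NegativePower

lemma not_mem_HsetG_top_of_neg {β : ℝ} (hβ : β < 0) : β ∉ HsetG (⊤ : SimpleGraph (Fin 2)) := by
  intro hmem
  have hA : !![(2 : ℝ), 1; 1, 2] ∈ PsetG (⊤ : SimpleGraph (Fin 2)) (Ici 0) := by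
    refine ⟨?_, fun i j => by fin_cases i <;> fin_cases j <;> simp,
      fun i j hij hadj => absurd hij hadj⟩
    convert PosSemidef.one.add (posSemidef_vecMulVec_self_star ![(1 : ℝ), 1]) using 1
    ext i j
    fin_cases i <;> fin_cases j <;> simp <;> norm_num
  have hdet : 1 ≤ (2 : ℝ) ^ β * 2 ^ β := by
    simpa [powEnt] using posSemidef_sq_apply_le (hmem _ hA).1 0 1
  have hlt : (2 : ℝ) ^ β < 1 := Real.rpow_lt_one_of_one_lt_of_neg one_lt_two hβ
  nlinarith [Real.rpow_pos_of_pos two_pos β]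

end NegativePower

section BandGraphLowerBound

variable {n d : ℕ}

lemma completeSplitGraph_isContained_bandGraph {k : ℕ} (hkd : k ≤ d) (hkn : k + 2 ≤ n) :
    completeSplitGraph (Fin k) (Fin 2) ⊑ bandGraph n d := by
  let g : Fin k ⊕ Fin 2 → Fin n :=
    Sum.elim (fun i => ⟨i + 1, by omega⟩) fun j => ⟨j * (k + 1), by fin_cases j <;> simp <;> omega⟩
  have hg : Function.Injective g := by
    rintro (i | i) (j | j) h <;> simp only [g, Sum.elim_inl, Sum.elim_inr, Fin.mk.injEq] at h
    · exact congrArg _ (Fin.ext (by omega))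
    · rcases Nat.le_one_iff_eq_zero_or_eq_one.1 (Fin.is_le j) with hj | hj <;>
        rw [hj] at h <;> omega
    · rcases Nat.le_one_iff_eq_zero_or_eq_one.1 (Fin.is_le i) with hi | hi <;>
        rw [hi] at h <;> omega
    · exact congrArg _ (Fin.ext (Nat.mul_right_cancel k.succ_pos h))
  have hle (x : Fin k ⊕ Fin 2) : (g x : ℕ) ≤ k + 1 := by
    rcases x with i | j
    · exact Nat.succ_le_succ i.2.le
    · exact mul_le_of_le_one_left (Nat.zero_le _) (Fin.is_le j)
  have hleft {x : Fin k ⊕ Fin 2} (hx : x.isLeft) : 1 ≤ (g x : ℕ) ∧ (g x : ℕ) ≤ k := by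
    obtain ⟨i, rfl⟩ := Sum.isLeft_iff.1 hx
    exact ⟨Nat.succ_pos i, i.2⟩
  have hadj {x y : Fin k ⊕ Fin 2} (h : (completeSplitGraph (Fin k) (Fin 2)).Adj x y) :
      (bandGraph n d).Adj (g x) (g y) := by
    refine ⟨hg.ne h.1, ?_⟩
    have hx := hle x
    have hy := hle y
    rcases h.2 with h | h <;> have hmid := hleft h <;> omega
  exact ⟨SimpleGraph.Hom.toCopy ⟨g, hadj⟩ hg⟩

lemma top_isContained_bandGraph (hn : 2 ≤ n) (hd : 1 ≤ d) :
    (⊤ : SimpleGraph (Fin 2)) ⊑ bandGraph n d := by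
  refine ⟨SimpleGraph.Hom.toCopy ⟨Fin.castLE hn, fun {i j} hij => ?_⟩ (Fin.castLE_injective hn)⟩
  exact ⟨(Fin.castLE_injective hn).ne hij, by simp; omega⟩

lemma not_mem_HsetG_bandGraph (hn : 2 ≤ n) (hd : 1 ≤ d) {β : ℝ}
    (hlt : min (d : ℝ) ((n : ℝ) - 2) - 1 < β) (hβ : β < min (d : ℝ) ((n : ℝ) - 2)) :
    β ∉ HsetG (bandGraph n d) := by
  obtain ⟨k, hk⟩ : ∃ k : ℕ, min d (n - 2) = k := ⟨_, rfl⟩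
  have hcast : min (d : ℝ) ((n : ℝ) - 2) = k := by
    rw [← hk]
    push_cast [hn]
    rfl
  rw [hcast] at hlt hβ
  intro hmem
  cases k with
  | zero =>
    exact not_mem_HsetG_top_of_neg (by simpa using hβ)
      (HsetG_subset_of_isContained (top_isContained_bandGraph hn hd) hmem)
  | succ l =>
    push_cast at hlt hβ
    exact not_mem_HsetG_completeSplitGraph (by linarith) hβ
      (HsetG_subset_of_isContained
        (completeSplitGraph_isContained_bandGraph (by omega) (by omega)) hmem)

end BandGraphLowerBound

section CriticalExponent

theorem isLeast_CEset {H : Set ℝ} {a : ℝ} (hge : ∀ β, a ≤ β → β ∈ H)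
    (hlt : ∀ β, a - 1 < β → β < a → β ∉ H) : IsLeast (CEset H) a := by
  refine ⟨hge, fun α hα => not_lt.1 fun hαa => ?_⟩
  obtain ⟨β, hβ, hβa⟩ := exists_between (max_lt hαa (sub_one_lt a))
  exact hlt β ((le_max_right _ _).trans_lt hβ) hβa (hα β ((le_max_left _ _).trans hβ.le))

variable {V : Type*} [Fintype V] (G : SimpleGraph V)

lemma PsetG_mono {I J : Set ℝ} (h : I ⊆ J) : PsetG G I ⊆ PsetG G J :=
  fun _ hA => ⟨hA.1, fun i j => h (hA.2.1 i j), hA.2.2⟩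

lemma map_powEnt_eq_map_signedPow (e : Bool) (β : ℝ) {A : Matrix V V ℝ} (hA : A ∈ PsetG G (Ici 0)) :
    A.map (powEnt β) = A.map (signedPow e β) :=
  Matrix.ext fun i j => powEnt_eq_signedPow e β (hA.2.1 i j)

lemma HsetPsi_subset_HsetG : HsetPsi G ⊆ HsetG G := fun β hβ A hA => by
  rw [map_powEnt_eq_map_signedPow G false β hA]
  exact hβ A (PsetG_mono G (subset_univ _) hA)

lemma HsetPhi_subset_HsetG : HsetPhi G ⊆ HsetG G := fun β hβ A hA => by
  rw [map_powEnt_eq_map_signedPow G true β hA]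
  exact hβ A (PsetG_mono G (subset_univ _) hA)

end CriticalExponent

/-- **Corollary 3.14 (band graphs)**: the band graph on `{1,…,n}` (`n ≥ 2`) with bandwidth
`1 ≤ d ≤ n` (edges between distinct `i,j` with `|i−j| ≤ d`) has all three critical exponents
equal to `min(d, n−2)`. -/
theorem critical_exponent_band_graph {n d : ℕ} (hn : 2 ≤ n) (hd1 : 1 ≤ d) (hdn : d ≤ n)
    (G : SimpleGraph (Fin n))
    (hG : ∀ i j : Fin n, G.Adj i j ↔ i ≠ j ∧ ((i : ℤ) - (j : ℤ)).natAbs ≤ d) :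
    IsLeast (CEset (HsetG G)) (min (d : ℝ) ((n : ℝ) - 2)) ∧
    IsLeast (CEset (HsetPsi G)) (min (d : ℝ) ((n : ℝ) - 2)) ∧
    IsLeast (CEset (HsetPhi G)) (min (d : ℝ) ((n : ℝ) - 2)) := by
  obtain rfl : G = bandGraph n d := SimpleGraph.ext (funext₂ fun i j => propext (hG i j))
  have hpreserve (e : Bool) (β : ℝ) (hβ : min (d : ℝ) ((n : ℝ) - 2) ≤ β) :
      ∀ A ∈ PsetG (bandGraph n d) univ, A.map (signedPow e β) ∈ PsetG (bandGraph n d) univ :=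
    fun A hA => map_signedPow_mem_PsetG_bandGraph hn hd1 e hβ hA
  have hfail (β : ℝ) := not_mem_HsetG_bandGraph (β := β) hn hd1
  exact ⟨
    isLeast_CEset (fun β hβ => HsetPsi_subset_HsetG _ (hpreserve false β hβ)) hfail,
    isLeast_CEset (hpreserve false) fun β hlt hβ h => hfail β hlt hβ (HsetPsi_subset_HsetG _ h),
    isLeast_CEset (hpreserve true) fun β hlt hβ h => hfail β hlt hβ (HsetPhi_subset_HsetG _ h)⟩
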